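/- Set m' = k_{i+1} − k_i − 1 and let c' := Σ_{g=0}^{m'} (−1)^{m'−g} ξ^g ⊗ ψ(x(₊ᵢk)_{i+1,m'−g}) ∈ H_{k⁺ⁱ} ⊗_{H_k} H_{k⁺ⁱ}. Then (ξ ⊗ 1)·c' = (1 ⊗ ξ)·c'; equivalently, Σ_{f=0}^{m'} (−1)^{m'−f} ξ^{f+1} ⊗ ψ(x(₊ᵢk)_{i+1,m'−f}) = Σ_{g=0}^{m'} (−1)^{m'−g} ξ^g ⊗ ξ·ψ(x(₊ᵢk)_{i+1,m'−g}). -/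

import Mathlib

/-!
Cohomology rings of `n`-step partial flag varieties, following
Khovanov–Lauda, "A diagrammatic approach to categorification of quantum groups III",
Section 5 (Iterated flag varieties).
-/

open MvPolynomial Finset TensorProduct

noncomputable section

variable (𝕜 : Type) [Field 𝕜]

/-- The generator `x(k)_{j,α}` of `H_k` (with the conventions `x(k)_{j,0} = 1` and
`x(k)_{j,α} = 0` for `j` or `α` out of range), at the level of the ambient polynomial ring. -/
def xp (n : ℕ) (k : ℕ → ℕ) (j α : ℕ) : MvPolynomial (ℕ × ℕ) 𝕜 :=
  if α = 0 then 1 else if 1 ≤ j ∧ j ≤ n ∧ α ≤ k j - k (j - 1) then X (j, α) else 0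

/-- The degree `2d` part of the defining relation of `H_k`: the sum over all tuples
`(α_1, …, α_n)` with `α_1 + ⋯ + α_n = d` of the products `x(k)_{1,α_1} ⋯ x(k)_{n,α_n}`
(out-of-range tuples contribute `0`). -/
def relPoly (n : ℕ) (k : ℕ → ℕ) (d : ℕ) : MvPolynomial (ℕ × ℕ) 𝕜 :=
  ∑ t ∈ Finset.Nat.antidiagonalTuple n d, ∏ j : Fin n, xp 𝕜 n k ((j : ℕ) + 1) (t j)

/-- The pairs `(j, α)` indexing the actual generators of `H_k`. -/
def InRangeK (n : ℕ) (k : ℕ → ℕ) (j α : ℕ) : Prop :=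
  1 ≤ j ∧ j ≤ n ∧ 1 ≤ α ∧ α ≤ k j - k (j - 1)

/-- The defining ideal of `H_k`: the relations `relPoly` for every `d ≥ 1`, together with
all the irrelevant variables of the ambient polynomial ring. -/
def relIdealK (n : ℕ) (k : ℕ → ℕ) : Ideal (MvPolynomial (ℕ × ℕ) 𝕜) :=
  Ideal.span ({p | ∃ d, 1 ≤ d ∧ p = relPoly 𝕜 n k d} ∪
    {p | ∃ j α : ℕ, ¬ InRangeK n k j α ∧ p = X (j, α)})

/-- The cohomology ring `H_k` of the `n`-step flag variety `Fl(k)`. -/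
abbrev HK (n : ℕ) (k : ℕ → ℕ) : Type := MvPolynomial (ℕ × ℕ) 𝕜 ⧸ relIdealK 𝕜 n k

/-- The generator `x(k)_{j,α} ∈ H_k` (with conventions). -/
def xK (n : ℕ) (k : ℕ → ℕ) (j α : ℕ) : HK 𝕜 n k :=
  Ideal.Quotient.mk (relIdealK 𝕜 n k) (xp 𝕜 n k j α)

open Classical in
/-- The dual generator `x̄(k)_{j,α}`: the sum over all tuples `(α_ℓ)_{ℓ ≠ j}` with
`∑_{ℓ ≠ j} α_ℓ = α` of the products `∏_{ℓ ≠ j} x(k)_{ℓ,α_ℓ}`, at the polynomial level. -/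
def xbarp (n : ℕ) (k : ℕ → ℕ) (j α : ℕ) : MvPolynomial (ℕ × ℕ) 𝕜 :=
  ∑ t ∈ Finset.Nat.antidiagonalTuple n α,
    if ∀ ℓ : Fin n, (ℓ : ℕ) + 1 = j → t ℓ = 0 then
      ∏ ℓ : Fin n, xp 𝕜 n k ((ℓ : ℕ) + 1) (t ℓ)
    else 0

/-- The dual generator `x̄(k)_{j,α} ∈ H_k`. -/
def xbarK (n : ℕ) (k : ℕ → ℕ) (j α : ℕ) : HK 𝕜 n k :=
  Ideal.Quotient.mk (relIdealK 𝕜 n k) (xbarp 𝕜 n k j α)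

/-- The dual generator with an integer index, with `x̄(k)_{j,α} = 0` for `α < 0`. -/
def xbarKZ (n : ℕ) (k : ℕ → ℕ) (j : ℕ) (α : ℤ) : HK 𝕜 n k :=
  if 0 ≤ α then xbarK 𝕜 n k j α.toNat else 0

/-- The sequence `₊ᵢk`, obtained from `k` by replacing `k i` with `k i + 1`. -/
def kup (k : ℕ → ℕ) (i : ℕ) : ℕ → ℕ := fun j => if j = i then k i + 1 else k j

/-- The pairs `(j, α)` indexing the actual generators of `H_{k⁺ⁱ}`:
`ξ` is the variable `(0, 1)`, the `x_{j,α}` (`j ≠ i+1`) are the variables `(j, α)`, and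
the `x'_{i+1,α}` are the variables `(i+1, α)`. -/
def InRangeKi (n : ℕ) (k : ℕ → ℕ) (i j α : ℕ) : Prop :=
  (j = 0 ∧ α = 1) ∨
  (1 ≤ j ∧ j ≤ n ∧ j ≠ i + 1 ∧ 1 ≤ α ∧ α ≤ k j - k (j - 1)) ∨
  (j = i + 1 ∧ 1 ≤ α ∧ α ≤ k (i + 1) - k i - 1)

/-- The generator `x_{j,α}` (for `j ≠ i + 1`) of `H_{k⁺ⁱ}`, with conventions,
at the polynomial level. -/
def yp (n : ℕ) (k : ℕ → ℕ) (i j α : ℕ) : MvPolynomial (ℕ × ℕ) 𝕜 :=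
  if α = 0 then 1
  else if 1 ≤ j ∧ j ≤ n ∧ j ≠ i + 1 ∧ α ≤ k j - k (j - 1) then X (j, α) else 0

/-- The generator `x'_{i+1,α}` of `H_{k⁺ⁱ}`, with conventions, at the polynomial level. -/
def y'p (n : ℕ) (k : ℕ → ℕ) (i α : ℕ) : MvPolynomial (ℕ × ℕ) 𝕜 :=
  if α = 0 then 1 else if α ≤ k (i + 1) - k i - 1 then X (i + 1, α) else 0

/-- The coefficient of `t^α` in the `j`-th factor of the generating series
`(1 + ξt) ⬝ (∑_α x'_{i+1,α} t^α) ⬝ ∏_{j ≠ i+1} (∑_α x_{j,α} t^α)` defining `H_{k⁺ⁱ}`;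
the factor `j = 0` is `1 + ξ t`. -/
def fp (n : ℕ) (k : ℕ → ℕ) (i j α : ℕ) : MvPolynomial (ℕ × ℕ) 𝕜 :=
  if j = 0 then (if α = 0 then 1 else if α = 1 then X (0, 1) else 0)
  else if j = i + 1 then y'p 𝕜 n k i α
  else yp 𝕜 n k i j α

/-- The coefficient of `t^d` in
`(1 + ξt) ⬝ (∑_α x'_{i+1,α} t^α) ⬝ ∏_{j ≠ i+1} (∑_α x_{j,α} t^α)`. -/
def relPolyKi (n : ℕ) (k : ℕ → ℕ) (i d : ℕ) : MvPolynomial (ℕ × ℕ) 𝕜 :=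
  ∑ t ∈ Finset.Nat.antidiagonalTuple (n + 1) d, ∏ j : Fin (n + 1), fp 𝕜 n k i (j : ℕ) (t j)

/-- The defining ideal of `H_{k⁺ⁱ}`. -/
def relIdealKi (n : ℕ) (k : ℕ → ℕ) (i : ℕ) : Ideal (MvPolynomial (ℕ × ℕ) 𝕜) :=
  Ideal.span ({p | ∃ d, 1 ≤ d ∧ p = relPolyKi 𝕜 n k i d} ∪
    {p | ∃ j α : ℕ, ¬ InRangeKi n k i j α ∧ p = X (j, α)})

/-- The cohomology ring `H_{k⁺ⁱ}` of the `(n+1)`-step flag variety `Fl(k⁺ⁱ)`. -/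
abbrev HKi (n : ℕ) (k : ℕ → ℕ) (i : ℕ) : Type := MvPolynomial (ℕ × ℕ) 𝕜 ⧸ relIdealKi 𝕜 n k i

/-- The degree `2` generator `ξ ∈ H_{k⁺ⁱ}`. -/
def xiK (n : ℕ) (k : ℕ → ℕ) (i : ℕ) : HKi 𝕜 n k i :=
  Ideal.Quotient.mk (relIdealKi 𝕜 n k i) (X (0, 1))

/-- The generator `x_{j,α} ∈ H_{k⁺ⁱ}` (for `j ≠ i + 1`), with conventions. -/
def yK (n : ℕ) (k : ℕ → ℕ) (i j α : ℕ) : HKi 𝕜 n k i :=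
  Ideal.Quotient.mk (relIdealKi 𝕜 n k i) (yp 𝕜 n k i j α)

/-- The generator `x'_{i+1,α} ∈ H_{k⁺ⁱ}`, with conventions. -/
def y'K (n : ℕ) (k : ℕ → ℕ) (i α : ℕ) : HKi 𝕜 n k i :=
  Ideal.Quotient.mk (relIdealKi 𝕜 n k i) (y'p 𝕜 n k i α)

/-- `φ : H_k → H_{k⁺ⁱ}` is the algebra homomorphism determined by
`φ(x(k)_{j,α}) = x_{j,α}` for `j ≠ i+1` and
`φ(x(k)_{i+1,α}) = ξ·x'_{i+1,α-1} + x'_{i+1,α}`. -/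
def IsPhi (n : ℕ) (k : ℕ → ℕ) (i : ℕ) (φ : HK 𝕜 n k →ₐ[𝕜] HKi 𝕜 n k i) : Prop :=
  (∀ j α : ℕ, j ≠ i + 1 → φ (xK 𝕜 n k j α) = yK 𝕜 n k i j α) ∧
  (∀ α : ℕ, 1 ≤ α → φ (xK 𝕜 n k (i + 1) α) =
    xiK 𝕜 n k i * y'K 𝕜 n k i (α - 1) + y'K 𝕜 n k i α)

/-- `ψ : H_{₊ᵢk} → H_{k⁺ⁱ}` is the algebra homomorphism determined by
`ψ(x(₊ᵢk)_{j,α}) = x_{j,α}` for `j ≠ i, i+1`, `ψ(x(₊ᵢk)_{i+1,α}) = x'_{i+1,α}`, and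
`ψ(x(₊ᵢk)_{i,α}) = ξ·x_{i,α-1} + x_{i,α}`. -/
def IsPsi (n : ℕ) (k : ℕ → ℕ) (i : ℕ) (ψ : HK 𝕜 n (kup k i) →ₐ[𝕜] HKi 𝕜 n k i) : Prop :=
  (∀ j α : ℕ, j ≠ i → j ≠ i + 1 → ψ (xK 𝕜 n (kup k i) j α) = yK 𝕜 n k i j α) ∧
  (∀ α : ℕ, ψ (xK 𝕜 n (kup k i) (i + 1) α) = y'K 𝕜 n k i α) ∧
  (∀ α : ℕ, 1 ≤ α → ψ (xK 𝕜 n (kup k i) i α) =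
    xiK 𝕜 n k i * yK 𝕜 n k i i (α - 1) + yK 𝕜 n k i i α)

/-- The degree `2d` homogeneous component of a quotient of the polynomial ring, where the
variable `(j, α)` has degree `2α`. -/
def qgrade (I : Ideal (MvPolynomial (ℕ × ℕ) 𝕜)) (d : ℕ) :
    Submodule 𝕜 (MvPolynomial (ℕ × ℕ) 𝕜 ⧸ I) :=
  Submodule.map (Ideal.Quotient.mkₐ 𝕜 I).toLinearMap
    (weightedHomogeneousSubmodule 𝕜 (fun v : ℕ × ℕ => 2 * v.2) d)

end

section Statements2

variable (𝕜 : Type) [Field 𝕜]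

/-!
Put `p = ∑ (-1) ^ (m' + 1 - g) x(k)_{i+1, m'+1-g} T ^ g ∈ H_k[T]` and
`q = ∑ (-1) ^ (m' - g) x'_{i+1, m'-g} T ^ g ∈ H_{k⁺ⁱ}[T]`. The formula for `φ` says exactly that
`p` becomes `(T - ξ) q` over `H_{k⁺ⁱ}`. The coefficients of `p` come from `H_k`, so over
`H_{k⁺ⁱ} ⊗ H_{k⁺ⁱ}` the two copies of `(T - ξ) q` agree. Evaluating at `T = ξ ⊗ 1` kills the left
copy and turns the right one into `(ξ ⊗ 1 - 1 ⊗ ξ) c'`.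
-/

section AlternatingPolynomial

open scoped Polynomial

variable {R A B : Type*} [CommRing R] [CommRing A] [CommRing B]

/-- The polynomial `u 0 T ^ m - u 1 T ^ (m - 1) + ⋯ + (-1) ^ m u m`. When the `u α` are the
elementary symmetric functions of `m` elements, it is the monic polynomial with these roots. It
packages the sum defining `c'` as a value of a polynomial. -/
noncomputable def alternatingPoly (u : ℕ → R) (m : ℕ) : R[X] :=
  ∑ g ∈ range (m + 1), Polynomial.C ((-1) ^ (m - g) * u (m - g)) * Polynomial.X ^ g

lemma alternatingPoly_succ (u : ℕ → R) (m : ℕ) :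
    alternatingPoly u (m + 1) =
      Polynomial.X * alternatingPoly u m + Polynomial.C ((-1) ^ (m + 1) * u (m + 1)) := by
  simp only [alternatingPoly, sum_range_succ' _ (m + 1), mul_sum, Nat.add_sub_add_right, pow_succ',
    Nat.sub_zero, pow_zero, mul_one, mul_left_comm Polynomial.X]

lemma X_sub_C_mul_alternatingPoly {b : R} {e v : ℕ → R} (he₀ : e 0 = v 0)
    (he : ∀ α, e (α + 1) = b * v α + v (α + 1)) (m : ℕ) :
    (Polynomial.X - Polynomial.C b) * alternatingPoly v m =
      alternatingPoly e (m + 1) - Polynomial.C ((-1) ^ (m + 1) * v (m + 1)) := by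
  induction m with
  | zero =>
    simp only [alternatingPoly, sum_range_succ, sum_range_zero, he₀, he, map_mul, map_add, map_pow,
      map_neg, map_one]
    ring
  | succ m ih =>
    rw [alternatingPoly_succ e, he, alternatingPoly_succ v]
    simp only [map_mul, map_add, map_pow, map_neg, map_one] at ih ⊢
    linear_combination Polynomial.X * ih

lemma map_alternatingPoly (f : R →+* A) (u : ℕ → R) (m : ℕ) :
    (alternatingPoly u m).map f = alternatingPoly (f ∘ u) m := by
  simp [alternatingPoly, Polynomial.map_sum]

lemma eval₂_alternatingPoly (f : R →+* A) (a : A) (u : ℕ → R) (m : ℕ) :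
    (alternatingPoly u m).eval₂ f a =
      ∑ g ∈ range (m + 1), (-1) ^ (m - g) * (a ^ g * f (u (m - g))) := by
  simp only [alternatingPoly, Polynomial.eval₂_finsetSum, Polynomial.eval₂_mul, Polynomial.eval₂_C,
    Polynomial.eval₂_X_pow]
  refine sum_congr rfl fun g _ => ?_
  rw [map_mul, map_pow, map_neg, map_one]
  ring

variable [Algebra R A] [Algebra R B]

lemma tmul_one_mul_eval₂_eq_one_tmul_mul_eval₂ {p : R[X]} {q : B[X]} {a : A} {b : B}
    (hpa : Polynomial.aeval a p = 0)
    (hpq : p.map (algebraMap R B) = (Polynomial.X - Polynomial.C b) * q) :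
    (a ⊗ₜ[R] (1 : B)) *
        q.eval₂ (Algebra.TensorProduct.includeRight (R := R) (A := A)).toRingHom (a ⊗ₜ[R] 1) =
      ((1 : A) ⊗ₜ[R] b) *
        q.eval₂ (Algebra.TensorProduct.includeRight (R := R) (A := A)).toRingHom (a ⊗ₜ[R] 1) := by
  let inclR : B →+* A ⊗[R] B := (Algebra.TensorProduct.includeRight (R := R) (A := A)).toRingHom
  have eval_eq_zero : (p.map (algebraMap R B)).eval₂ inclR (a ⊗ₜ[R] 1) = 0 := calc
    (p.map (algebraMap R B)).eval₂ inclR (a ⊗ₜ[R] 1)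
      = Polynomial.aeval (Algebra.TensorProduct.includeLeft (S := R) (B := B) a) p := by
        rw [Polynomial.eval₂_map, Polynomial.aeval_def]
        congr 1
        exact Algebra.TensorProduct.includeRight.comp_algebraMap
    _ = 0 := by rw [Polynomial.aeval_algHom_apply, hpa, map_zero]
  rw [hpq, Polynomial.eval₂_mul, Polynomial.eval₂_sub, Polynomial.eval₂_X, Polynomial.eval₂_C,
    sub_mul] at eval_eq_zero
  exact sub_eq_zero.mp eval_eq_zero

lemma tmul_one_mul_sum_eq_one_tmul_mul_sum {ξ : A} {e : ℕ → R} {v : ℕ → A} {m : ℕ}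
    (he₀ : algebraMap R A (e 0) = v 0)
    (he : ∀ α, algebraMap R A (e (α + 1)) = ξ * v α + v (α + 1)) (hv : v (m + 1) = 0) :
    (ξ ⊗ₜ[R] (1 : A)) *
        ∑ g ∈ range (m + 1), (-1 : A ⊗[R] A) ^ (m - g) * ((ξ ^ g) ⊗ₜ[R] v (m - g)) =
      ((1 : A) ⊗ₜ[R] ξ) *
        ∑ g ∈ range (m + 1), (-1 : A ⊗[R] A) ^ (m - g) * ((ξ ^ g) ⊗ₜ[R] v (m - g)) := by
  have map_eq : (alternatingPoly e (m + 1)).map (algebraMap R A) =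
      (Polynomial.X - Polynomial.C ξ) * alternatingPoly v m := by
    rw [X_sub_C_mul_alternatingPoly (e := algebraMap R A ∘ e) he₀ he, map_alternatingPoly, hv]
    simp
  have root : Polynomial.aeval ξ (alternatingPoly e (m + 1)) = 0 := by
    rw [Polynomial.aeval_def, ← Polynomial.eval_map, map_eq]
    simp
  simpa [eval₂_alternatingPoly] using tmul_one_mul_eval₂_eq_one_tmul_mul_eval₂ root map_eq

end AlternatingPolynomial

section Generators

variable {𝕜}

lemma xK_zero (n : ℕ) (k : ℕ → ℕ) (j : ℕ) : xK 𝕜 n k j 0 = 1 := by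
  simp [xK, xp]

lemma y'K_zero (n : ℕ) (k : ℕ → ℕ) (i : ℕ) : y'K 𝕜 n k i 0 = 1 := by
  simp [y'K, y'p]

lemma y'K_eq_zero {n : ℕ} {k : ℕ → ℕ} {i α : ℕ} (hα : k (i + 1) - k i - 1 < α) :
    y'K 𝕜 n k i α = 0 := by
  simp [y'K, y'p, Nat.ne_zero_of_lt hα, hα.not_ge]

end Generators

set_option synthInstance.maxHeartbeats 1000000 in
set_option maxHeartbeats 1000000 in
theorem stmt10 (n N i : ℕ) (k : ℕ → ℕ)
    (hn : 1 ≤ n) (hk0 : k 0 = 0) (hkN : k n = N) (hmono : ∀ j, j < n → k j ≤ k (j + 1))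
    (hi1 : 1 ≤ i) (hin : i + 1 ≤ n) (hik : k i < k (i + 1))
    (φ : HK 𝕜 n k →ₐ[𝕜] HKi 𝕜 n k i) (hφ : IsPhi 𝕜 n k i φ)
    (ψ : HK 𝕜 n (kup k i) →ₐ[𝕜] HKi 𝕜 n k i) (hψ : IsPsi 𝕜 n k i ψ) :
    letI : Algebra (HK 𝕜 n k) (HKi 𝕜 n k i) := φ.toRingHom.toAlgebra
    (xiK 𝕜 n k i ⊗ₜ[HK 𝕜 n k] (1 : HKi 𝕜 n k i)) *
      (∑ g ∈ Finset.range (k (i + 1) - k i - 1 + 1),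
        (-1 : TensorProduct (HK 𝕜 n k) (HKi 𝕜 n k i) (HKi 𝕜 n k i)) ^
            (k (i + 1) - k i - 1 - g) *
          ((xiK 𝕜 n k i ^ g) ⊗ₜ[HK 𝕜 n k]
            ψ (xK 𝕜 n (kup k i) (i + 1) (k (i + 1) - k i - 1 - g)))) =
    ((1 : HKi 𝕜 n k i) ⊗ₜ[HK 𝕜 n k] xiK 𝕜 n k i) *
      (∑ g ∈ Finset.range (k (i + 1) - k i - 1 + 1),
        (-1 : TensorProduct (HK 𝕜 n k) (HKi 𝕜 n k i) (HKi 𝕜 n k i)) ^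
            (k (i + 1) - k i - 1 - g) *
          ((xiK 𝕜 n k i ^ g) ⊗ₜ[HK 𝕜 n k]
            ψ (xK 𝕜 n (kup k i) (i + 1) (k (i + 1) - k i - 1 - g)))) := by
  let : Algebra (HK 𝕜 n k) (HKi 𝕜 n k i) := φ.toRingHom.toAlgebra
  have algebraMap_xK_zero : algebraMap (HK 𝕜 n k) (HKi 𝕜 n k i) (xK 𝕜 n k (i + 1) 0) =
      y'K 𝕜 n k i 0 := by
    rw [xK_zero, y'K_zero, map_one]
  have algebraMap_xK_succ (α : ℕ) : algebraMap (HK 𝕜 n k) (HKi 𝕜 n k i) (xK 𝕜 n k (i + 1) (α + 1)) =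
      xiK 𝕜 n k i * y'K 𝕜 n k i α + y'K 𝕜 n k i (α + 1) :=
    hφ.2 (α + 1) α.succ_pos
  simp only [hψ.2.1]
  exact tmul_one_mul_sum_eq_one_tmul_mul_sum algebraMap_xK_zero algebraMap_xK_succ
    (y'K_eq_zero (Nat.lt_succ_self _))

end Statements2
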